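/- Let α ∈ C_loc^log and q ∈ 𝒫^log with 1 < q⁻ ≤ q⁺ < ∞. There is a constant c > 0 such that for every double sequence of complex numbers λ = {λ_{v,m}}_{v∈ℕ₀,m∈ℤⁿ} with ‖λ‖_{b̃^{−α(·),q'(·)}_{q'(·),q'(·)}} < ∞ and every double sequence of complex numbers s = {s_{v,m}}_{v∈ℕ₀,m∈ℤⁿ} with ‖s‖_{f^{α(·)}_{1,q(·)}} < ∞ one has Σ_{v=0}^∞ Σ_{m∈ℤⁿ} |s_{v,m}| |λ_{v,m}| ≤ c ‖s‖_{f^{α(·)}_{1,q(·)}} ‖λ‖_{b̃^{−α(·),q'(·)}_{q'(·),q'(·)}}; in particular the pairing T_λ(s) = Σ_{v=0}^∞ Σ_{m∈ℤⁿ} s_{v,m} conj(λ_{v,m}) converges absolutely and |T_λ(s)| ≤ c ‖s‖_{f^{α(·)}_{1,q(·)}} ‖λ‖_{b̃^{−α(·),q'(·)}_{q'(·),q'(·)}}. -/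

import Mathlib

/-!
The bound holds with `c = 4`, by a stopping argument.

Write `r = q'` and let `H_v(x)` be the inner sum of `btNorm` over levels `≥ v` (`carlesonSum`).
If `μ` exceeds the norm of `λ`, then `2^{vn} ∫_Q H_v(x) / μ^{r(x)} dx ≤ 1` for every dyadic cube `Q`
of level `v`, so by Markov's inequality the set `E_Q = {x ∈ Q | H_v(x) ≤ 2 μ^{r(x)}}`
(`goodSet`) has measure at least `|Q| / 2` (`one_le_measure_goodSet`). Therefore
`∑_Q |s_Q| |λ_Q| ≤ 2 ∫ ∑_Q |Q|⁻¹ |s_Q| |λ_Q| χ_{E_Q}(x) dx`.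
At a fixed `x` the exponents are constants, and since
`|Q|⁻¹ = 2^{v(α(x)+n/2)} 2^{v(-α(x)+n/2)}`, Hölder's inequality for sums bounds the integrand by the
integrand of `fNorm` times `(∑_{Q : x ∈ E_Q} (2^{v(-α(x)+n/2)} |λ_Q|)^{r(x)})^{1/r(x)}`. If `v₀` is the
smallest level of a cube with `x ∈ E_Q`, the last sum is at most `H_{v₀}(x) ≤ 2 μ^{r(x)}`
(`tsum_goodSet_le`), so the last factor is at most `2 μ`. Finally let `μ` decrease to the norm of `λ`.
-/

noncomputable section
open MeasureTheory ENNReal Set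
open scoped ENNReal

abbrev Rn (n : ℕ) := EuclideanSpace ℝ (Fin n)

/-- The dyadic cube `Q_{v,m}` (with `v ∈ ℕ₀`, so `|Q_{v,m}| = 2^{-vn} ≤ 1`). -/
def dyadicCube (n : ℕ) (v : ℕ) (m : Fin n → ℤ) : Set (Rn n) :=
  {x | ∀ i, (m i : ℝ) ≤ 2 ^ v * x i ∧ 2 ^ v * x i < m i + 1}

/-- The variable-exponent modular `ϱ_{p(·)}`. -/
def modularVE (n : ℕ) (p : Rn n → ℝ) (f : Rn n → ℝ≥0∞) : ℝ≥0∞ :=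
  ∫⁻ x, f x ^ p x

/-- The Luxemburg norm `‖·‖_{p(·)}`. -/
def luxNorm (n : ℕ) (p : Rn n → ℝ) (f : Rn n → ℝ≥0∞) : ℝ≥0∞ :=
  sInf {μ : ℝ≥0∞ | 0 < μ ∧ modularVE n p (fun x => f x / μ) ≤ 1}

/-- Local log-Hölder continuity with constant `c`. -/
def LocLogHolderWith (n : ℕ) (c : ℝ) (g : Rn n → ℝ) : Prop :=
  ∀ x y : Rn n, x ≠ y → |g x - g y| ≤ c / Real.log (Real.exp 1 + 1 / ‖x - y‖)

/-- The log-Hölder decay condition. -/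
def LogHolderDecay (n : ℕ) (g : Rn n → ℝ) : Prop :=
  ∃ g_inf c : ℝ, 0 < c ∧ ∀ x : Rn n, |g x - g_inf| ≤ c / Real.log (Real.exp 1 + ‖x‖)

/-- Global log-Hölder continuity. -/
def GlobLogHolder (n : ℕ) (g : Rn n → ℝ) : Prop :=
  (∃ c : ℝ, 0 < c ∧ LocLogHolderWith n c g) ∧ LogHolderDecay n g

/-- The sequence space norm `‖λ‖_{b̃^{β(·),r(·)}_{r(·),r(·)}}`: the supremum over dyadic
cubes `P = Q_{vP,m0}` with `|P| ≤ 1` of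
`‖ x ↦ ( |P|^{-1} Σ_{v≥v_P} Σ_m 2^{v(β(x)+n/2)r(x)} |λ_{v,m}|^{r(x)} χ_{v,m}(x) )^{1/r(x)} χ_P ‖_{r(·)}`;
here `|P|^{-1} = 2^{vP·n}`. -/
def btNorm (n : ℕ) (r β : Rn n → ℝ) (lam : ℕ → (Fin n → ℤ) → ℂ) : ℝ≥0∞ :=
  ⨆ (vP : ℕ) (m0 : Fin n → ℤ),
    luxNorm n r ((dyadicCube n vP m0).indicator fun x =>
      ((2 : ℝ≥0∞) ^ ((vP : ℝ) * n) *
        ∑' (v : ℕ), ∑' (m : Fin n → ℤ),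
          (if vP ≤ v then (1 : ℝ≥0∞) else 0) *
            (2 : ℝ≥0∞) ^ ((v : ℝ) * (β x + n / 2) * r x) *
              ENNReal.ofReal ‖lam v m‖ ^ r x *
                (dyadicCube n v m).indicator (fun _ => (1 : ℝ≥0∞)) x) ^ (1 / r x))

/-- The sequence space norm `‖s‖_{f^{α(·)}_{1,q(·)}}` of a double sequence of complex
numbers: `∫_{ℝⁿ} ( Σ_{v,m} 2^{v(α(x)+n/2)q(x)} |s_{v,m}|^{q(x)} χ_{v,m}(x) )^{1/q(x)} dx`. -/
def fNorm (n : ℕ) (q α : Rn n → ℝ) (s : ℕ → (Fin n → ℤ) → ℂ) : ℝ≥0∞ :=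
  ∫⁻ x, (∑' (v : ℕ), ∑' (m : Fin n → ℤ),
    (2 : ℝ≥0∞) ^ ((v : ℝ) * (α x + n / 2) * q x) *
      ENNReal.ofReal ‖s v m‖ ^ q x *
        (dyadicCube n v m).indicator (fun _ => (1 : ℝ≥0∞)) x) ^ (1 / q x)

/-- The sum over all dyadic cubes of level at least `v₀` which occurs in `btNorm`. -/
def carlesonSum (n : ℕ) (r β : Rn n → ℝ) (lam : ℕ → (Fin n → ℤ) → ℂ) (v₀ : ℕ) (x : Rn n) :
    ℝ≥0∞ :=
  ∑' (v : ℕ), ∑' (m : Fin n → ℤ),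
    (if v₀ ≤ v then (1 : ℝ≥0∞) else 0) *
      (2 : ℝ≥0∞) ^ ((v : ℝ) * (β x + n / 2) * r x) *
        ENNReal.ofReal ‖lam v m‖ ^ r x *
          (dyadicCube n v m).indicator (fun _ => (1 : ℝ≥0∞)) x

/-- The part of a dyadic cube on which the tail sum starting at its level is at most `2 μ^{r(x)}`. -/
def goodSet (n : ℕ) (r β : Rn n → ℝ) (lam : ℕ → (Fin n → ℤ) → ℂ) (μ : ℝ≥0∞) (v : ℕ)
    (m : Fin n → ℤ) : Set (Rn n) :=
  {x | x ∈ dyadicCube n v m ∧ carlesonSum n r β lam v x ≤ 2 * μ ^ r x}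

lemma measurableSet_dyadicCube (n v : ℕ) (m : Fin n → ℤ) : MeasurableSet (dyadicCube n v m) := by
  have h : dyadicCube n v m =
      ⋂ i, {x : Rn n | (m i : ℝ) ≤ 2 ^ v * x i} ∩ {x : Rn n | 2 ^ v * x i < m i + 1} := by
    ext x; simp [dyadicCube]
  rw [h]
  exact MeasurableSet.iInter fun i =>
    (measurableSet_le (by fun_prop) (by fun_prop)).inter
      (measurableSet_lt (by fun_prop) (by fun_prop))

lemma volume_dyadicCube (n v : ℕ) (m : Fin n → ℤ) :
    (2 : ℝ≥0∞) ^ ((v : ℝ) * n) * volume (dyadicCube n v m) = 1 := by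
  have h2 : (0 : ℝ) < 2 ^ v := by positivity
  have h : dyadicCube n v m = (MeasurableEquiv.toLp 2 (Fin n → ℝ)).symm ⁻¹'
      (Set.pi univ fun i => Set.Ico ((m i : ℝ) / 2 ^ v) ((m i + 1) / 2 ^ v)) := by
    ext x
    simp [dyadicCube, div_le_iff₀ h2, lt_div_iff₀ h2, mul_comm]
  have h3 : ∀ i, ((m i : ℝ) + 1) / 2 ^ v - (m i : ℝ) / 2 ^ v = (2 ^ v)⁻¹ := fun i => by ring
  rw [h, (EuclideanSpace.volume_preserving_symm_measurableEquiv_toLp (Fin n)).measure_preimage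
    (MeasurableSet.univ_pi fun i => measurableSet_Ico).nullMeasurableSet, Real.volume_pi_Ico]
  simp only [h3, Finset.prod_const, Finset.card_univ, Fintype.card_fin]
  rw [ENNReal.ofReal_inv_of_pos h2, ENNReal.ofReal_pow (by norm_num), ENNReal.rpow_mul,
    ENNReal.rpow_natCast, ENNReal.rpow_natCast, ← mul_pow]
  simp [ENNReal.mul_inv_cancel]

lemma measurable_carlesonSum (n : ℕ) {r β : Rn n → ℝ} (hr : Measurable r) (hβ : Measurable β)
    (lam : ℕ → (Fin n → ℤ) → ℂ) (v₀ : ℕ) : Measurable (carlesonSum n r β lam v₀) := by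
  refine Measurable.tsum fun v => Measurable.tsum fun m => ?_
  refine Measurable.mul (Measurable.mul (Measurable.mul measurable_const ?_) ?_)
    (measurable_const.indicator (measurableSet_dyadicCube n v m))
  · exact measurable_const.pow (by fun_prop)
  · exact measurable_const.pow hr

lemma measurableSet_goodSet (n : ℕ) {r β : Rn n → ℝ} (hr : Measurable r) (hβ : Measurable β)
    (lam : ℕ → (Fin n → ℤ) → ℂ) (μ : ℝ≥0∞) (v : ℕ) (m : Fin n → ℤ) :
    MeasurableSet (goodSet n r β lam μ v m) :=
  (measurableSet_dyadicCube n v m).inter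
    (measurableSet_le (measurable_carlesonSum n hr hβ lam v)
      (measurable_const.mul (measurable_const.pow hr)))

/-- The modular is decreasing in the scaling parameter, so every `μ` above the Luxemburg norm
is admissible. -/
lemma modularVE_le_one_of_luxNorm_lt (n : ℕ) {p : Rn n → ℝ} (hp : ∀ᵐ x, 0 < p x)
    (f : Rn n → ℝ≥0∞) {μ : ℝ≥0∞} (h : luxNorm n p f < μ) :
    modularVE n p (fun x => f x / μ) ≤ 1 := by
  obtain ⟨ν, ⟨-, hν⟩, hνμ⟩ := sInf_lt_iff.1 h
  refine le_trans (lintegral_mono_ae ?_) hν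
  filter_upwards [hp] with x hx
  exact ENNReal.rpow_le_rpow (ENNReal.div_le_div_left hνμ.le _) hx.le

/-- Markov's inequality: the good part of a dyadic cube fills at least half of it. -/
lemma one_le_measure_goodSet (n : ℕ) {r β : Rn n → ℝ} (hr : Measurable r) (hβ : Measurable β)
    (hr0 : ∀ᵐ x, 0 < r x) (lam : ℕ → (Fin n → ℤ) → ℂ) {μ : ℝ≥0∞} (hμt : μ ≠ ⊤)
    (hμ : btNorm n r β lam < μ) (v : ℕ) (m : Fin n → ℤ) :
    1 ≤ 2 * ((2 : ℝ≥0∞) ^ ((v : ℝ) * n) * volume (goodSet n r β lam μ v m)) := by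
  have hμ0 : μ ≠ 0 := (bot_le.trans_lt hμ).ne'
  set K : ℝ≥0∞ := (2 : ℝ≥0∞) ^ ((v : ℝ) * n) with hK
  have hK0 : K ≠ 0 := (ENNReal.rpow_pos (by norm_num) (by norm_num)).ne'
  have hKt : K ≠ ⊤ := ENNReal.rpow_ne_top_of_nonneg (by positivity) (by norm_num)
  set Q := dyadicCube n v m with hQ
  set E := goodSet n r β lam μ v m with hE
  have hmod := modularVE_le_one_of_luxNorm_lt n hr0 _
    (lt_of_le_of_lt (le_iSup₂ (f := fun (vP : ℕ) (m0 : Fin n → ℤ) =>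
      luxNorm n r ((dyadicCube n vP m0).indicator fun x =>
        ((2 : ℝ≥0∞) ^ ((vP : ℝ) * n) * carlesonSum n r β lam vP x) ^ (1 / r x))) v m) hμ)
  have hint : ∫⁻ x in Q, K * (carlesonSum n r β lam v x / μ ^ r x) ≤ 1 := by
    rw [← lintegral_indicator (measurableSet_dyadicCube n v m)]
    refine le_trans (lintegral_mono_ae ?_) hmod
    filter_upwards [hr0] with x hx
    by_cases hxQ : x ∈ Q
    · rw [indicator_of_mem hxQ, indicator_of_mem hxQ, ENNReal.div_rpow_of_nonneg _ _ hx.le,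
        ← ENNReal.rpow_mul, one_div, inv_mul_cancel₀ hx.ne', ENNReal.rpow_one, mul_div_assoc]
    · rw [indicator_of_notMem hxQ]
      exact bot_le
  have hbad : (2 * K) * volume (Q \ E) ≤ 1 := by
    refine le_trans ?_ hint
    refine le_trans ?_ (lintegral_mono_set (sdiff_subset : Q \ E ⊆ Q))
    rw [← setLIntegral_const]
    refine setLIntegral_mono' ((measurableSet_dyadicCube n v m).diff
      (measurableSet_goodSet n hr hβ lam μ v m)) fun x hx => ?_
    have h1 : 2 * μ ^ r x < carlesonSum n r β lam v x := by
      by_contra hcon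
      exact hx.2 ⟨hx.1, not_lt.1 hcon⟩
    rw [mul_comm]
    gcongr
    rw [ENNReal.le_div_iff_mul_le]
    · exact h1.le
    · exact Or.inl (ENNReal.rpow_pos (pos_iff_ne_zero.2 hμ0) hμt).ne'
    · exact Or.inl (ENNReal.rpow_ne_top_of_ne_zero hμ0 hμt)
  have hsum : (2 : ℝ≥0∞) ≤ 2 * (K * volume E) + 1 := by
    calc (2 : ℝ≥0∞) = 2 * (K * volume Q) := by rw [hK, hQ, volume_dyadicCube, mul_one]
      _ ≤ 2 * (K * (volume E + volume (Q \ E))) := by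
        gcongr
        refine le_trans (measure_mono ?_) (measure_union_le _ _)
        rw [union_sdiff_self]
        exact subset_union_right
      _ = 2 * (K * volume E) + 2 * K * volume (Q \ E) := by ring
      _ ≤ _ := by gcongr
  have h11 : (1 : ℝ≥0∞) + 1 ≤ 2 * (K * volume E) + 1 := by
    rw [one_add_one_eq_two]; exact hsum
  exact (ENNReal.add_le_add_iff_right ENNReal.one_ne_top).1 h11

/-- Hölder's inequality for sums in `ℝ≥0∞`, from the integral version for the counting measure. -/
lemma tsum_mul_le_Lp_mul_Lq {ι : Type*} {p q : ℝ} (hpq : p.HolderConjugate q)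
    (f g : ι → ℝ≥0∞) :
    ∑' i, f i * g i ≤ (∑' i, f i ^ p) ^ (1 / p) * (∑' i, g i ^ q) ^ (1 / q) := by
  let _ : MeasurableSpace ι := ⊤
  have h := ENNReal.lintegral_mul_le_Lp_mul_Lq (Measure.count : Measure ι) hpq
    (f := f) (g := g) (measurable_from_top.aemeasurable) (measurable_from_top.aemeasurable)
  simpa [lintegral_count] using h

/-- Only levels above the first one whose cube is good at `x` contribute, hence the sum over the
cubes that are good at `x` is controlled by a single tail sum. -/
lemma tsum_goodSet_le (n : ℕ) (r β : Rn n → ℝ) (lam : ℕ → (Fin n → ℤ) → ℂ) (μ : ℝ≥0∞) (x : Rn n) :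
    ∑' (v : ℕ), ∑' (m : Fin n → ℤ),
      (2 : ℝ≥0∞) ^ ((v : ℝ) * (β x + n / 2) * r x) * ENNReal.ofReal ‖lam v m‖ ^ r x *
        (goodSet n r β lam μ v m).indicator (fun _ => (1 : ℝ≥0∞)) x ≤ 2 * μ ^ r x := by
  classical
  by_cases hex : ∃ v, ∃ m, x ∈ goodSet n r β lam μ v m
  · obtain ⟨m₀, hm₀⟩ := Nat.find_spec hex
    refine le_trans ?_ hm₀.2
    refine ENNReal.tsum_le_tsum fun v => ENNReal.tsum_le_tsum fun m => ?_
    by_cases hx : x ∈ goodSet n r β lam μ v m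
    · have hv : Nat.find hex ≤ v := Nat.find_min' hex ⟨m, hx⟩
      rw [indicator_of_mem hx, indicator_of_mem hx.1, if_pos hv, one_mul]
    · rw [indicator_of_notMem hx, mul_zero]
      exact bot_le
  · push Not at hex
    simp [hex]

/-- Pointwise Hölder's inequality at a fixed point, where both exponents are constants. -/
lemma pointwise_bound (n : ℕ) (q α : Rn n → ℝ) (lam s : ℕ → (Fin n → ℤ) → ℂ) (μ : ℝ≥0∞)
    (x : Rn n) (hx : 1 < q x) :
    ∑' (v : ℕ), ∑' (m : Fin n → ℤ),
      ENNReal.ofReal (‖s v m‖ * ‖lam v m‖) * (2 : ℝ≥0∞) ^ ((v : ℝ) * n) *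
        (goodSet n (fun x => q x / (q x - 1)) (fun x => -α x) lam μ v m).indicator
          (fun _ => (1 : ℝ≥0∞)) x ≤
    (∑' (v : ℕ), ∑' (m : Fin n → ℤ),
      (2 : ℝ≥0∞) ^ ((v : ℝ) * (α x + n / 2) * q x) * ENNReal.ofReal ‖s v m‖ ^ q x *
        (dyadicCube n v m).indicator (fun _ => (1 : ℝ≥0∞)) x) ^ (1 / q x) * (2 * μ) := by
  set G := goodSet n (fun x => q x / (q x - 1)) (fun x => -α x) lam μ with hG
  have hpq : (q x).HolderConjugate (q x / (q x - 1)) := Real.HolderConjugate.conjExponent hx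
  set r : ℝ := q x / (q x - 1) with hr
  have hq0 : 0 < q x := hpq.pos
  have hr0 : 0 < r := hpq.symm.pos
  have hH := tsum_mul_le_Lp_mul_Lq hpq
    (fun p : ℕ × (Fin n → ℤ) => (2 : ℝ≥0∞) ^ ((p.1 : ℝ) * (α x + n / 2)) *
      ENNReal.ofReal ‖s p.1 p.2‖ * (dyadicCube n p.1 p.2).indicator (fun _ => (1 : ℝ≥0∞)) x)
    (fun p : ℕ × (Fin n → ℤ) => (2 : ℝ≥0∞) ^ ((p.1 : ℝ) * (-α x + n / 2)) *
      ENNReal.ofReal ‖lam p.1 p.2‖ * (G p.1 p.2).indicator (fun _ => (1 : ℝ≥0∞)) x)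
  have hind : ∀ (A : Set (Rn n)) (t : ℝ), 0 < t →
      (A.indicator (fun _ => (1 : ℝ≥0∞)) x) ^ t = A.indicator (fun _ => (1 : ℝ≥0∞)) x := by
    intro A t ht
    by_cases h : x ∈ A <;> simp [h, ht]
  simp only [ENNReal.tsum_prod', ENNReal.mul_rpow_of_nonneg _ _ hq0.le,
    ENNReal.mul_rpow_of_nonneg _ _ hr0.le, hind _ _ hq0, hind _ _ hr0,
    ← ENNReal.rpow_mul] at hH
  have hlast : (∑' (v : ℕ), ∑' (m : Fin n → ℤ),
      (2 : ℝ≥0∞) ^ ((v : ℝ) * (-α x + n / 2) * r) * ENNReal.ofReal ‖lam v m‖ ^ r *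
        (G v m).indicator (fun _ => (1 : ℝ≥0∞)) x) ^ (1 / r) ≤ 2 * μ := by
    have h1 := tsum_goodSet_le n (fun x => q x / (q x - 1)) (fun x => -α x) lam μ x
    refine le_trans (ENNReal.rpow_le_rpow h1 (by positivity)) ?_
    change (2 * μ ^ r) ^ (1 / r) ≤ 2 * μ
    rw [ENNReal.mul_rpow_of_nonneg _ _ (by positivity), ← ENNReal.rpow_mul,
      mul_one_div_cancel hr0.ne', ENNReal.rpow_one]
    gcongr
    have h2 : 1 / r ≤ 1 := by
      rw [div_le_one hr0]; exact hpq.symm.lt.le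
    calc (2 : ℝ≥0∞) ^ (1 / r) ≤ 2 ^ (1 : ℝ) :=
          ENNReal.rpow_le_rpow_of_exponent_le (by norm_num) h2
      _ = 2 := ENNReal.rpow_one _
  refine le_trans ?_ (hH.trans (mul_le_mul_right hlast _))
  refine ENNReal.tsum_le_tsum fun v => ENNReal.tsum_le_tsum fun m => ?_
  by_cases hxG : x ∈ G v m
  · have hexp : (2 : ℝ≥0∞) ^ ((v : ℝ) * n) =
        2 ^ ((v : ℝ) * (α x + n / 2)) * 2 ^ ((v : ℝ) * (-α x + n / 2)) := by
      rw [← ENNReal.rpow_add _ _ (by norm_num) (by norm_num)]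
      congr 1; ring
    rw [indicator_of_mem hxG, indicator_of_mem (show x ∈ dyadicCube n v m from hxG.1),
      ENNReal.ofReal_mul (norm_nonneg _), hexp]
    apply le_of_eq
    ring
  · simp [hxG]

/-- The pairing estimate with the norm of `λ` replaced by any larger finite `μ`. -/
lemma pairing_bound (n : ℕ) (q α : Rn n → ℝ) (hqm : Measurable q) (hαm : Measurable α)
    (hq : ∀ᵐ x, 1 < q x) (lam s : ℕ → (Fin n → ℤ) → ℂ) {μ : ℝ≥0∞} (hμt : μ ≠ ⊤)
    (hμ : btNorm n (fun x => q x / (q x - 1)) (fun x => -α x) lam < μ) :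
    ∑' (v : ℕ) (m : Fin n → ℤ), ENNReal.ofReal (‖s v m‖ * ‖lam v m‖) ≤
      4 * fNorm n q α s * μ := by
  have hrm : Measurable (fun x => q x / (q x - 1)) := hqm.div (hqm.sub measurable_const)
  have hβm : Measurable (fun x => -α x) := hαm.neg
  have hr0 : ∀ᵐ x, 0 < q x / (q x - 1) := by
    filter_upwards [hq] with x hx
    exact div_pos (by linarith) (by linarith)
  set G := goodSet n (fun x => q x / (q x - 1)) (fun x => -α x) lam μ with hG
  have hGm : ∀ v m, MeasurableSet (G v m) := fun v m => measurableSet_goodSet n hrm hβm lam μ v m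
  calc ∑' (v : ℕ) (m : Fin n → ℤ), ENNReal.ofReal (‖s v m‖ * ‖lam v m‖)
      ≤ ∑' (v : ℕ) (m : Fin n → ℤ), 2 * ∫⁻ x, ENNReal.ofReal (‖s v m‖ * ‖lam v m‖) *
          (2 : ℝ≥0∞) ^ ((v : ℝ) * n) * (G v m).indicator (fun _ => (1 : ℝ≥0∞)) x := by
        refine ENNReal.tsum_le_tsum fun v => ENNReal.tsum_le_tsum fun m => ?_
        rw [lintegral_const_mul _ (measurable_const.indicator (hGm v m)),
          lintegral_indicator_const (hGm v m), one_mul]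
        have h := one_le_measure_goodSet n hrm hβm hr0 lam hμt hμ v m
        calc ENNReal.ofReal (‖s v m‖ * ‖lam v m‖)
            = ENNReal.ofReal (‖s v m‖ * ‖lam v m‖) * 1 := (mul_one _).symm
          _ ≤ _ := mul_le_mul_right h _
          _ = _ := by ring
    _ = 2 * ∫⁻ x, ∑' (v : ℕ) (m : Fin n → ℤ), ENNReal.ofReal (‖s v m‖ * ‖lam v m‖) *
          (2 : ℝ≥0∞) ^ ((v : ℝ) * n) * (G v m).indicator (fun _ => (1 : ℝ≥0∞)) x := by
        have hmeas : ∀ v m, Measurable fun x => ENNReal.ofReal (‖s v m‖ * ‖lam v m‖) *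
            (2 : ℝ≥0∞) ^ ((v : ℝ) * n) * (G v m).indicator (fun _ => (1 : ℝ≥0∞)) x :=
          fun v m => measurable_const.mul (measurable_const.indicator (hGm v m))
        rw [lintegral_tsum fun v => (Measurable.tsum fun m => hmeas v m).aemeasurable]
        simp_rw [lintegral_tsum fun m => (hmeas _ m).aemeasurable, ENNReal.tsum_mul_left]
    _ ≤ 2 * ∫⁻ x, (∑' (v : ℕ), ∑' (m : Fin n → ℤ),
          (2 : ℝ≥0∞) ^ ((v : ℝ) * (α x + n / 2) * q x) * ENNReal.ofReal ‖s v m‖ ^ q x *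
            (dyadicCube n v m).indicator (fun _ => (1 : ℝ≥0∞)) x) ^ (1 / q x) * (2 * μ) := by
        gcongr 2 * ?_
        refine lintegral_mono_ae ?_
        filter_upwards [hq] with x hx
        exact pointwise_bound n q α lam s μ x hx
    _ = 4 * fNorm n q α s * μ := by
        rw [lintegral_mul_const' _ _ (ENNReal.mul_ne_top (by norm_num) hμt)]
        unfold fNorm
        ring

/-- for `α ∈ C_loc^log` and `q ∈ 𝒫^log` with `1 < q⁻ ≤ q⁺ < ∞`, there is
`c > 0` such that whenever `‖λ‖_{b̃^{-α(·),q'(·)}_{q'(·),q'(·)}} < ∞` and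
`‖s‖_{f^{α(·)}_{1,q(·)}} < ∞`, the pairing `T_λ(s) = Σ_{v,m} s_{v,m} conj(λ_{v,m})`
converges absolutely with
`Σ_{v,m} |s_{v,m}||λ_{v,m}| ≤ c ‖s‖_{f^{α(·)}_{1,q(·)}} ‖λ‖_{b̃^{-α(·),q'(·)}_{q'(·),q'(·)}}`,
and `|T_λ(s)|` satisfies the same bound. -/
theorem statement12 (n : ℕ) (hn : 1 ≤ n) (q α : Rn n → ℝ)
    (hqmeas : Measurable q) (hαmeas : Measurable α)
    (hα : ∃ c : ℝ, 0 < c ∧ LocLogHolderWith n c α)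
    (hq1 : ∀ x, 1 ≤ q x)
    (hqlog : GlobLogHolder n fun x => 1 / q x)
    (qm qM : ℝ) (hqm : 1 < qm)
    (hq : ∀ᵐ x ∂(volume : Measure (Rn n)), qm ≤ q x ∧ q x ≤ qM) :
    ∃ c : ℝ, 0 < c ∧
      ∀ (lam s : ℕ → (Fin n → ℤ) → ℂ),
        btNorm n (fun x => q x / (q x - 1)) (fun x => -α x) lam < ⊤ →
        fNorm n q α s < ⊤ →
        (∑' (v : ℕ) (m : Fin n → ℤ), ENNReal.ofReal (‖s v m‖ * ‖lam v m‖)) ≤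
            ENNReal.ofReal c * fNorm n q α s *
              btNorm n (fun x => q x / (q x - 1)) (fun x => -α x) lam ∧
          Summable (fun vm : ℕ × (Fin n → ℤ) =>
            s vm.1 vm.2 * (starRingEnd ℂ) (lam vm.1 vm.2)) ∧
          ENNReal.ofReal ‖∑' vm : ℕ × (Fin n → ℤ),
              s vm.1 vm.2 * (starRingEnd ℂ) (lam vm.1 vm.2)‖ ≤
            ENNReal.ofReal c * fNorm n q α s *
              btNorm n (fun x => q x / (q x - 1)) (fun x => -α x) lam := by
  classical
  have hq' : ∀ᵐ x, 1 < q x := by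
    filter_upwards [hq] with x hx
    exact hqm.trans_le hx.1
  refine ⟨4, by norm_num, fun lam s hlam hs => ?_⟩
  have h4 : ENNReal.ofReal 4 = 4 := by norm_num
  rw [h4]
  set B := btNorm n (fun x => q x / (q x - 1)) (fun x => -α x) lam with hB
  have hmain : ∑' (v : ℕ) (m : Fin n → ℤ), ENNReal.ofReal (‖s v m‖ * ‖lam v m‖) ≤
      4 * fNorm n q α s * B := by
    refine ENNReal.le_mul_of_forall_lt (Or.inr hlam.ne)
      (Or.inl (ENNReal.mul_ne_top (by norm_num) hs.ne)) fun a ha b hb => ?_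
    rcases eq_or_ne b ⊤ with rfl | hbt
    · rw [ENNReal.mul_top (bot_le.trans_lt ha).ne']
      exact le_top
    · exact (pairing_bound n q α hqmeas hαmeas hq' lam s hbt hb).trans (mul_le_mul_left ha.le _)
  have hfin : 4 * fNorm n q α s * B ≠ ⊤ :=
    ENNReal.mul_ne_top (ENNReal.mul_ne_top (by norm_num) hs.ne) hlam.ne
  have heq : ∑' vm : ℕ × (Fin n → ℤ),
      ENNReal.ofReal ‖s vm.1 vm.2 * (starRingEnd ℂ) (lam vm.1 vm.2)‖ =
      ∑' (v : ℕ) (m : Fin n → ℤ), ENNReal.ofReal (‖s v m‖ * ‖lam v m‖) := by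
    rw [ENNReal.tsum_prod']
    simp
  have hnt := ne_top_of_le_ne_top hfin (heq.trans_le hmain)
  have hsum : Summable fun vm : ℕ × (Fin n → ℤ) =>
      ‖s vm.1 vm.2 * (starRingEnd ℂ) (lam vm.1 vm.2)‖ := by
    have h := ENNReal.summable_toReal hnt
    simpa only [ENNReal.toReal_ofReal (norm_nonneg _)] using h
  refine ⟨hmain, hsum.of_norm, ?_⟩
  refine le_trans (ENNReal.ofReal_le_ofReal (norm_tsum_le_tsum_norm hsum)) ?_
  rw [ENNReal.ofReal_tsum_of_nonneg (fun _ => norm_nonneg _) hsum, heq]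
  exact hmain


end
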